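/- Let ι be a finite type and let P : ι → ι → R be arbitrary. Define the Soloviev bracket {u,v} := -∑_{k,ℓ ≥ 0} ∂^{k+ℓ}( ∑_{a,b ∈ ι} (P a b) · (δ_{k,a} u) · (δ_{ℓ,b} v) ), where the sums over k and ℓ have only finitely many nonzero terms since δ_{k,a} u = 0 and δ_{ℓ,b} v = 0 for all large k, ℓ. Then for all u, v ∈ R one has ∂{u,v} = {u, ∂v}. -/

import Mathlib

open MvPolynomial

/-- The higher Euler operator `δ_{k,a} u = ∑_i (-1)^i binom(k+i,k) ∂^i(∂_{k+i,a} u)`. -/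
noncomputable def eulerOp {ι : Type*}
    (D : Derivation ℂ (MvPolynomial (ι × ℕ) ℂ) (MvPolynomial (ι × ℕ) ℂ))
    (k : ℕ) (a : ι) (u : MvPolynomial (ι × ℕ) ℂ) : MvPolynomial (ι × ℕ) ℂ :=
  ∑ᶠ i : ℕ, ((-1 : ℂ) ^ i * ((k + i).choose k : ℂ)) • (⇑D)^[i] (pderiv (a, k + i) u)

/-- Soloviev's bracket `{u,v} = -∑_{k,ℓ} ∂^{k+ℓ}( P^{ab} δ_{k,a}u δ_{ℓ,b}v )`. -/
noncomputable def solovievBracket {ι : Type*} [Fintype ι]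
    (D : Derivation ℂ (MvPolynomial (ι × ℕ) ℂ) (MvPolynomial (ι × ℕ) ℂ))
    (P : ι → ι → MvPolynomial (ι × ℕ) ℂ)
    (u v : MvPolynomial (ι × ℕ) ℂ) : MvPolynomial (ι × ℕ) ℂ :=
  -∑ᶠ (k : ℕ) (ℓ : ℕ),
    (⇑D)^[k + ℓ] (∑ a : ι, ∑ b : ι, P a b * eulerOp D k a u * eulerOp D ℓ b v)


theorem aux_comm {ι : Type*}
    (D : Derivation ℂ (MvPolynomial (ι × ℕ) ℂ) (MvPolynomial (ι × ℕ) ℂ))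
    (hD : ∀ (a : ι) (k : ℕ), D (X (a, k)) = X (a, k + 1))
    (a : ι) (m : ℕ) (v : MvPolynomial (ι × ℕ) ℂ) :
    pderiv (a, m + 1) (D v) = D (pderiv (a, m + 1) v) + pderiv (a, m) v := by
  classical
  have h : ⁅(pderiv (a, m + 1) : Derivation ℂ (MvPolynomial (ι × ℕ) ℂ) _), D⁆
      = (pderiv (a, m) : Derivation ℂ (MvPolynomial (ι × ℕ) ℂ) _) := by
    apply MvPolynomial.derivation_ext
    rintro ⟨b, k⟩
    rw [Derivation.commutator_apply, hD]
    simp only [pderiv_X, Pi.single_apply, Prod.mk.injEq]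
    by_cases h1 : b = a <;> by_cases h2 : k = m <;> by_cases h3 : k = m + 1 <;> simp [h1, h2, h3]
  have h2 := congrArg (fun d => d v) h
  simp only [Derivation.commutator_apply] at h2
  rw [← h2]; ring

theorem aux_comm0 {ι : Type*}
    (D : Derivation ℂ (MvPolynomial (ι × ℕ) ℂ) (MvPolynomial (ι × ℕ) ℂ))
    (hD : ∀ (a : ι) (k : ℕ), D (X (a, k)) = X (a, k + 1))
    (a : ι) (v : MvPolynomial (ι × ℕ) ℂ) :
    pderiv (a, 0) (D v) = D (pderiv (a, 0) v) := by
  classical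
  have h : ⁅(pderiv (a, 0) : Derivation ℂ (MvPolynomial (ι × ℕ) ℂ) _), D⁆ = 0 := by
    apply MvPolynomial.derivation_ext
    rintro ⟨b, k⟩
    rw [Derivation.commutator_apply, hD]
    simp only [pderiv_X, Pi.single_apply, Prod.mk.injEq]
    by_cases h1 : b = a <;> by_cases h2 : k = 0 <;> simp [h1, h2]
  have h2 := congrArg (fun d => d v) h
  simp only [Derivation.commutator_apply] at h2
  exact sub_eq_zero.mp h2

theorem aux_bound {ι : Type*} (u : MvPolynomial (ι × ℕ) ℂ) :
    ∃ N : ℕ, ∀ a : ι, ∀ m, N ≤ m → pderiv (a, m) u = 0 := by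
  refine ⟨u.vars.sup Prod.snd + 1, fun a m hm => ?_⟩
  apply pderiv_eq_zero_of_notMem_vars
  intro h
  have := Finset.le_sup (f := Prod.snd) h
  simp only at this
  omega

theorem aux_iter0 {ι : Type*}
    (D : Derivation ℂ (MvPolynomial (ι × ℕ) ℂ) (MvPolynomial (ι × ℕ) ℂ)) (n : ℕ) :
    (⇑D)^[n] 0 = 0 := iterate_map_zero D n

theorem aux_euler {ι : Type*}
    (D : Derivation ℂ (MvPolynomial (ι × ℕ) ℂ) (MvPolynomial (ι × ℕ) ℂ))
    (k : ℕ) (a : ι) (u : MvPolynomial (ι × ℕ) ℂ) (N M : ℕ)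
    (h : ∀ m, N ≤ m → pderiv (a, m) u = 0) (hM : N ≤ M) :
    eulerOp D k a u = ∑ i ∈ Finset.range M,
      ((-1 : ℂ) ^ i * ((k + i).choose k : ℂ)) • (⇑D)^[i] (pderiv (a, k + i) u) := by
  unfold eulerOp
  apply finsum_eq_sum_of_support_subset
  intro i hi
  by_contra hc
  apply hi
  simp only [Finset.coe_range, Set.mem_Iio, not_lt] at hc
  simp only
  rw [h _ (by omega), aux_iter0, smul_zero]

theorem aux_euler_zero {ι : Type*}
    (D : Derivation ℂ (MvPolynomial (ι × ℕ) ℂ) (MvPolynomial (ι × ℕ) ℂ))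
    (k : ℕ) (a : ι) (u : MvPolynomial (ι × ℕ) ℂ) (N : ℕ)
    (h : ∀ m, N ≤ m → pderiv (a, m) u = 0) (hk : N ≤ k) :
    eulerOp D k a u = 0 := by
  rw [aux_euler D k a u N N h le_rfl]
  apply Finset.sum_eq_zero
  intro i _
  rw [h _ (by omega), aux_iter0, smul_zero]

theorem aux_boundD {ι : Type*}
    (D : Derivation ℂ (MvPolynomial (ι × ℕ) ℂ) (MvPolynomial (ι × ℕ) ℂ))
    (hD : ∀ (a : ι) (k : ℕ), D (X (a, k)) = X (a, k + 1))
    (a : ι) (v : MvPolynomial (ι × ℕ) ℂ) (N : ℕ)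
    (h : ∀ m, N ≤ m → pderiv (a, m) v = 0) :
    ∀ m, N + 1 ≤ m → pderiv (a, m) (D v) = 0 := by
  intro m hm
  obtain ⟨m, rfl⟩ : ∃ j, m = j + 1 := ⟨m - 1, by omega⟩
  rw [aux_comm D hD, h _ (by omega), h _ (by omega)]; simp

theorem aux_succ {ι : Type*}
    (D : Derivation ℂ (MvPolynomial (ι × ℕ) ℂ) (MvPolynomial (ι × ℕ) ℂ))
    (hD : ∀ (a : ι) (k : ℕ), D (X (a, k)) = X (a, k + 1))
    (k : ℕ) (a : ι) (v : MvPolynomial (ι × ℕ) ℂ) (N : ℕ)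
    (h : ∀ m, N ≤ m → pderiv (a, m) v = 0) :
    eulerOp D (k + 1) a (D v) = eulerOp D k a v := by
  rw [aux_euler D (k + 1) a (D v) (N + 1) (N + 1) (aux_boundD D hD a v N h) le_rfl,
    aux_euler D k a v N (N + 1) h (by omega)]
  have e : ∀ i, (⇑D)^[i] (pderiv (a, k + 1 + i) (D v)) =
      (⇑D)^[i + 1] (pderiv (a, k + 1 + i) v) + (⇑D)^[i] (pderiv (a, k + i) v) := by
    intro i
    rw [show k + 1 + i = (k + i) + 1 by omega, aux_comm D hD, iterate_map_add,
      Function.iterate_succ_apply]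
  simp only [e, smul_add, Finset.sum_add_distrib]
  rw [Finset.sum_range_succ, h (k + 1 + N) (by omega), aux_iter0, smul_zero, add_zero]
  rw [Finset.sum_range_succ' _ N, Finset.sum_range_succ' _ N, ← add_assoc,
    ← Finset.sum_add_distrib]
  congr 1
  · apply Finset.sum_congr rfl
    intro i _
    rw [show k + 1 + i = k + (i + 1) by omega, ← add_smul]
    congr 1
    rw [show k + 1 + (i + 1) = (k + (i + 1)) + 1 by omega, Nat.choose_succ_succ]
    push_cast
    ring
  · simp

theorem aux_zero {ι : Type*}
    (D : Derivation ℂ (MvPolynomial (ι × ℕ) ℂ) (MvPolynomial (ι × ℕ) ℂ))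
    (hD : ∀ (a : ι) (k : ℕ), D (X (a, k)) = X (a, k + 1))
    (a : ι) (v : MvPolynomial (ι × ℕ) ℂ) (N : ℕ)
    (h : ∀ m, N ≤ m → pderiv (a, m) v = 0) :
    eulerOp D 0 a (D v) = 0 := by
  rw [aux_euler D 0 a (D v) (N + 1) (N + 1) (aux_boundD D hD a v N h) le_rfl]
  have key : ∀ M, ∑ i ∈ Finset.range (M + 1),
      ((-1 : ℂ) ^ i * ((0 + i).choose 0 : ℂ)) • (⇑D)^[i] (pderiv (a, 0 + i) (D v))
      = (-1 : ℂ) ^ M • (⇑D)^[M + 1] (pderiv (a, M) v) := by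
    intro M
    induction M with
    | zero => simp [aux_comm0 D hD]
    | succ M ih =>
      rw [Finset.sum_range_succ, ih]
      simp only [zero_add, Nat.choose_zero_right, Nat.cast_one, mul_one]
      rw [aux_comm D hD, iterate_map_add, ← Function.iterate_succ_apply, smul_add, pow_succ]
      simp
  rw [key, h N le_rfl, aux_iter0, smul_zero]

theorem aux_bracket {ι : Type*} [Fintype ι]
    (D : Derivation ℂ (MvPolynomial (ι × ℕ) ℂ) (MvPolynomial (ι × ℕ) ℂ))
    (P : ι → ι → MvPolynomial (ι × ℕ) ℂ)
    (u v : MvPolynomial (ι × ℕ) ℂ) (N M : ℕ)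
    (hu : ∀ a : ι, ∀ m, N ≤ m → pderiv (a, m) u = 0)
    (hv : ∀ a : ι, ∀ m, M ≤ m → pderiv (a, m) v = 0) :
    solovievBracket D P u v = -∑ k ∈ Finset.range N, ∑ l ∈ Finset.range M,
      (⇑D)^[k + l] (∑ a : ι, ∑ b : ι, P a b * eulerOp D k a u * eulerOp D l b v) := by
  unfold solovievBracket
  congr 1
  have e : ∀ k, (∑ᶠ l : ℕ,
      (⇑D)^[k + l] (∑ a : ι, ∑ b : ι, P a b * eulerOp D k a u * eulerOp D l b v)) =
      ∑ l ∈ Finset.range M,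
      (⇑D)^[k + l] (∑ a : ι, ∑ b : ι, P a b * eulerOp D k a u * eulerOp D l b v) := by
    intro k
    apply finsum_eq_sum_of_support_subset
    intro l hl
    by_contra hc
    apply hl
    simp only [Finset.coe_range, Set.mem_Iio, not_lt] at hc
    have : ∀ b, eulerOp D l b v = 0 := fun b => aux_euler_zero D l b v M (hv b) hc
    simp [this, aux_iter0]
  simp only [e]
  apply finsum_eq_sum_of_support_subset
  intro k hk
  by_contra hc
  apply hk
  simp only [Finset.coe_range, Set.mem_Iio, not_lt] at hc
  have : ∀ b, eulerOp D k b u = 0 := fun b => aux_euler_zero D k b u N (hu b) hc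
  simp [this, aux_iter0]

/-- Soloviev's bracket intertwines the total derivative: `∂{u,v} = {u,∂v}`. -/
theorem stmt_6 (ι : Type*) [Fintype ι]
    (D : Derivation ℂ (MvPolynomial (ι × ℕ) ℂ) (MvPolynomial (ι × ℕ) ℂ))
    (hD : ∀ (a : ι) (k : ℕ), D (X (a, k)) = X (a, k + 1))
    (P : ι → ι → MvPolynomial (ι × ℕ) ℂ)
    (u v : MvPolynomial (ι × ℕ) ℂ) :
    D (solovievBracket D P u v) = solovievBracket D P u (D v) := by
  obtain ⟨N, hu⟩ := aux_bound u
  obtain ⟨M, hv⟩ := aux_bound v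
  rw [aux_bracket D P u v N M hu hv,
    aux_bracket D P u (D v) N (M + 1) hu (fun a => aux_boundD D hD a v M (hv a))]
  rw [map_neg, map_sum]
  congr 1
  apply Finset.sum_congr rfl
  intro k _
  have h1 : ∀ l b, eulerOp D (l + 1) b (D v) = eulerOp D l b v :=
    fun l b => aux_succ D hD l b v M (hv b)
  have h0 : ∀ b, eulerOp D 0 b (D v) = 0 := fun b => aux_zero D hD b v M (hv b)
  rw [Finset.sum_range_succ', map_sum]
  simp only [h0, h1, mul_zero, Finset.sum_const_zero, aux_iter0, add_zero, ← add_assoc,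
    Function.iterate_succ_apply']
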